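/- Let I = (G, Π) be an affine unique games instance over a finite abelian group Σ, on a finite weighted graph G = (V,E) with stationary distribution π and edge constraints X_u − X_v = a_{uv}. Let 0 < ν < β < 1 and let p : [0,1] → ℝ satisfy 0 ≤ p(x) ≤ 1 and p(x) ≤ x/(β−ν) + ν for every x ∈ [0,1]. Let μ be a shift-symmetric probability distribution over assignments X ∈ Σ^V (for every s ∈ Σ, X + s has the same law as X), and let X, X' be independent samples from μ. Define the approximate shift-partition potential Φ_{β,ν}(μ) = E_{X,X'}[ Σ_{s∈Σ} ( E_{u∼π}[ 1(X_u − X'_u = s) · p(val_u(X)) ] )² ], and the conditioned shift potential Ψ(μ) = E_{u,v∼π}[ Σ_{s∈Σ} Pr_μ[X_v − X_u = s]² · E_μ[val_v(X) | X_v − X_u = s] ] (terms with probability-0 conditioning taken to be 0). Then Φ_{β,ν}(μ) ≤ Ψ(μ)/(β−ν) + ν. -/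

import Mathlib

/-!
Expanding the square in `Φ` introduces a second vertex, and the two shifts `X u - X' u` and
`X v - X' v` coincide exactly when `X` and `X'` have the same difference on `(u, v)`. On the other
side, `Pr[X v - X u = s]²` times a conditional expectation is `Pr[X' v - X' u = s]` for an
independent copy `X'`, times an unnormalised expectation over `X`. Hence `Φ` and `Ψ` are both
expectations over `X, X' ∼ μ` and `u, v ∼ π`, restricted to the event
`X v - X u = X' v - X' u`, of `p (val_u X) * p (val_v X)` and of `val_v X` respectively, and the
bound holds pointwise, since `p (val_u X) * p (val_v X) ≤ p (val_v X) ≤ val_v X / (β - ν) + ν`.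
-/

open Finset

theorem sum_sum_ite_eq_mul_sum_ite_eq {ι κ α R : Type*} [Fintype ι] [Fintype κ] [Fintype α]
    [DecidableEq α] [NonUnitalNonAssocSemiring R] (x : ι → α) (y : κ → α) (c : ι → R) (d : κ → R) :
    ∑ s, (∑ i, if x i = s then c i else 0) * (∑ j, if y j = s then d j else 0) =
      ∑ i, ∑ j, if x i = y j then c i * d j else 0 := by
  simp only [sum_mul_sum]
  rw [sum_comm]
  refine sum_congr rfl fun i _ => ?_
  rw [sum_comm]
  refine sum_congr rfl fun j _ => ?_
  simp [ite_mul, eq_comm]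

theorem div_sum_mem_stdSimplex {ι 𝕜 : Type*} [Fintype ι] [Field 𝕜] [LinearOrder 𝕜]
    [IsStrictOrderedRing 𝕜] {d : ι → 𝕜} (hd : ∀ i, 0 ≤ d i) (hsum : ∑ i, d i ≠ 0) :
    (fun i => d i / ∑ j, d j) ∈ stdSimplex 𝕜 ι :=
  ⟨fun i => div_nonneg (hd i) (sum_nonneg fun j _ => hd j), by rw [← sum_div, div_self hsum]⟩

theorem sum_mul_div_sum_mem_Icc {ι 𝕜 : Type*} [Fintype ι] [Field 𝕜] [LinearOrder 𝕜]
    [IsStrictOrderedRing 𝕜] {w z : ι → 𝕜} (hw : ∀ i, 0 ≤ w i) (hz : ∀ i, z i ∈ Set.Icc 0 1) :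
    (∑ i, w i * z i) / ∑ i, w i ∈ Set.Icc 0 1 := by
  have hsum : 0 ≤ ∑ i, w i := sum_nonneg fun i _ => hw i
  exact ⟨div_nonneg (sum_nonneg fun i _ => mul_nonneg (hw i) (hz i).1) hsum,
    div_le_one_of_le₀ (sum_le_sum fun i _ => mul_le_of_le_one_right (hw i) (hz i).2) hsum⟩

section Potentials

variable {V Γ : Type*} [Fintype V] [DecidableEq V] [Fintype Γ] [AddCommGroup Γ] [DecidableEq Γ]

/-- The probability `Pr_μ[X v - X u = s]`, for a mass function `μ` on assignments. -/
noncomputable def shiftProb (μ : (V → Γ) → ℝ) (v u : V) (s : Γ) : ℝ :=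
  ∑ X : V → Γ, μ X * (if X v - X u = s then (1 : ℝ) else 0)

/-- The conditional expectation `E_μ[g v X | X v - X u = s]`, set to `0` when the condition has
probability `0`. -/
noncomputable def condShiftMean (μ : (V → Γ) → ℝ) (g : V → (V → Γ) → ℝ) (v u : V) (s : Γ) : ℝ :=
  if shiftProb μ v u s = 0 then 0
  else (∑ X : V → Γ, μ X * (if X v - X u = s then (1 : ℝ) else 0) * g v X) / shiftProb μ v u s

/-- The conditioned shift potential `Ψ(μ)`, with the local value `val_v(X)` replaced by an arbitrary
function `g v X` and the stationary distribution by an arbitrary vertex weighting `π`. -/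
noncomputable def condShiftPotential (π : V → ℝ) (μ : (V → Γ) → ℝ) (g : V → (V → Γ) → ℝ) : ℝ :=
  ∑ u, ∑ v, π u * π v * ∑ s : Γ, shiftProb μ v u s ^ 2 * condShiftMean μ g v u s

/-- The approximate shift-partition potential `Φ(μ)`, with the approximate indicator `p(val_u(X))`
replaced by an arbitrary function `f u X` and the stationary distribution by an arbitrary vertex
weighting `π`. -/
noncomputable def shiftPartitionPotential (π : V → ℝ) (μ : (V → Γ) → ℝ) (f : V → (V → Γ) → ℝ) : ℝ :=
  ∑ X : V → Γ, ∑ X' : V → Γ, μ X * μ X' *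
    ∑ s : Γ, (∑ u, π u * ((if X u - X' u = s then (1 : ℝ) else 0) * f u X)) ^ 2

/-- The expectation, over independent `X, X' ∼ μ` and `u, v ∼ π`, of `h u v X` restricted to the
event that `X` and `X'` have the same difference on `(u, v)`. Both potentials are of this form. -/
noncomputable def shiftAgreementMean (π : V → ℝ) (μ : (V → Γ) → ℝ) (h : V → V → (V → Γ) → ℝ) : ℝ :=
  ∑ X : V → Γ, ∑ X' : V → Γ, μ X * μ X' *
    ∑ u, ∑ v, π u * π v * if X v - X u = X' v - X' u then h u v X else 0

theorem shiftAgreementMean_mono {π : V → ℝ} {μ : (V → Γ) → ℝ} (hπ : ∀ v, 0 ≤ π v)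
    (hμ : ∀ X, 0 ≤ μ X) {h k : V → V → (V → Γ) → ℝ} (hhk : ∀ u v X, h u v X ≤ k u v X) :
    shiftAgreementMean π μ h ≤ shiftAgreementMean π μ k := by
  refine sum_le_sum fun X _ => sum_le_sum fun X' _ =>
    mul_le_mul_of_nonneg_left ?_ (mul_nonneg (hμ X) (hμ X'))
  refine sum_le_sum fun u _ => sum_le_sum fun v _ =>
    mul_le_mul_of_nonneg_left ?_ (mul_nonneg (hπ u) (hπ v))
  split_ifs
  exacts [hhk u v X, le_rfl]

theorem shiftAgreementMean_mul_add_const (π : V → ℝ) (μ : (V → Γ) → ℝ) (κ ν : ℝ)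
    (h : V → V → (V → Γ) → ℝ) :
    shiftAgreementMean π μ (fun u v X => κ * h u v X + ν) =
      κ * shiftAgreementMean π μ h + ν * shiftAgreementMean π μ 1 := by
  simp only [shiftAgreementMean, mul_sum, ← sum_add_distrib]
  refine sum_congr rfl fun X _ => sum_congr rfl fun X' _ =>
    sum_congr rfl fun u _ => sum_congr rfl fun v _ => ?_
  split_ifs
  · simp only [Pi.one_apply]
    ring
  · simp only [mul_zero, add_zero]

theorem shiftAgreementMean_one_le_one {π : V → ℝ} {μ : (V → Γ) → ℝ}
    (hπ : π ∈ stdSimplex ℝ V) (hμ : μ ∈ stdSimplex ℝ (V → Γ)) :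
    shiftAgreementMean π μ 1 ≤ 1 := by
  have hμμ : ∑ X, ∑ X', μ X * μ X' = 1 := by rw [← sum_mul_sum, hμ.2, one_mul]
  have hππ : ∑ u, ∑ v, π u * π v = 1 := by rw [← sum_mul_sum, hπ.2, one_mul]
  rw [← hμμ]
  refine sum_le_sum fun X _ => sum_le_sum fun X' _ =>
    mul_le_of_le_one_right (mul_nonneg (hμ.1 X) (hμ.1 X')) ?_
  rw [← hππ]
  refine sum_le_sum fun u _ => sum_le_sum fun v _ =>
    mul_le_of_le_one_right (mul_nonneg (hπ.1 u) (hπ.1 v)) ?_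
  split_ifs
  exacts [le_rfl, zero_le_one]

theorem shiftPartitionPotential_eq_shiftAgreementMean (π : V → ℝ) (μ : (V → Γ) → ℝ)
    (f : V → (V → Γ) → ℝ) :
    shiftPartitionPotential π μ f = shiftAgreementMean π μ fun u v X => f u X * f v X := by
  refine sum_congr rfl fun X _ => sum_congr rfl fun X' _ => congrArg _ ?_
  simp only [ite_mul, one_mul, zero_mul, mul_ite, mul_zero, sq, sum_sum_ite_eq_mul_sum_ite_eq]
  refine sum_congr rfl fun u _ => sum_congr rfl fun v _ => ?_
  have hshift : X u - X' u = X v - X' v ↔ X v - X u = X' v - X' u :=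
    eq_comm.trans sub_eq_sub_iff_sub_eq_sub
  rw [if_congr hshift (mul_mul_mul_comm _ _ _ _) rfl]

theorem shiftProb_sq_mul_condShiftMean (μ : (V → Γ) → ℝ) (g : V → (V → Γ) → ℝ) (v u : V) (s : Γ) :
    shiftProb μ v u s ^ 2 * condShiftMean μ g v u s =
      (∑ X : V → Γ, μ X * (if X v - X u = s then (1 : ℝ) else 0) * g v X) * shiftProb μ v u s := by
  unfold condShiftMean
  split_ifs with hprob
  · rw [hprob, mul_zero, mul_zero]
  · field_simp

theorem sum_shiftProb_sq_mul_condShiftMean (μ : (V → Γ) → ℝ) (g : V → (V → Γ) → ℝ) (v u : V) :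
    ∑ s, shiftProb μ v u s ^ 2 * condShiftMean μ g v u s =
      ∑ X : V → Γ, ∑ X' : V → Γ, μ X * μ X' * if X v - X u = X' v - X' u then g v X else 0 := by
  simp only [shiftProb_sq_mul_condShiftMean]
  simp only [shiftProb, mul_ite, ite_mul, mul_one, mul_zero, zero_mul,
    sum_sum_ite_eq_mul_sum_ite_eq, mul_right_comm]

theorem condShiftPotential_eq_shiftAgreementMean (π : V → ℝ) (μ : (V → Γ) → ℝ)
    (g : V → (V → Γ) → ℝ) :
    condShiftPotential π μ g = shiftAgreementMean π μ fun _ v X => g v X := by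
  simp only [condShiftPotential, shiftAgreementMean, sum_shiftProb_sq_mul_condShiftMean, mul_sum]
  rw [sum_comm_cycle]
  refine sum_congr rfl fun X _ => ?_
  rw [sum_comm_cycle]
  exact sum_congr rfl fun X' _ => sum_congr rfl fun u _ => sum_congr rfl fun v _ =>
    mul_left_comm _ _ _

theorem stmt19_general {π : V → ℝ} {μ : (V → Γ) → ℝ} (hπ : π ∈ stdSimplex ℝ V)
    (hμ : μ ∈ stdSimplex ℝ (V → Γ)) {f g : V → (V → Γ) → ℝ} (hf : ∀ v X, f v X ∈ Set.Icc 0 1)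
    {κ ν : ℝ} (hν : 0 ≤ ν) (hfg : ∀ v X, f v X ≤ κ * g v X + ν) :
    shiftPartitionPotential π μ f ≤ κ * condShiftPotential π μ g + ν := by
  have hpointwise (u v : V) (X : V → Γ) : f u X * f v X ≤ κ * g v X + ν :=
    (mul_le_of_le_one_left (hf v X).1 (hf u X).2).trans (hfg v X)
  calc shiftPartitionPotential π μ f
      = shiftAgreementMean π μ fun u v X => f u X * f v X :=
        shiftPartitionPotential_eq_shiftAgreementMean π μ f
    _ ≤ shiftAgreementMean π μ fun _ v X => κ * g v X + ν :=
        shiftAgreementMean_mono hπ.1 hμ.1 hpointwise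
    _ = κ * condShiftPotential π μ g + ν * shiftAgreementMean π μ 1 := by
        rw [shiftAgreementMean_mul_add_const, condShiftPotential_eq_shiftAgreementMean]
    _ ≤ κ * condShiftPotential π μ g + ν := by
        gcongr
        exact mul_le_of_le_one_right hν (shiftAgreementMean_one_le_one hπ hμ)

end Potentials

/-- the approximate shift-partition potential is bounded by the conditioned
shift potential: Φ_{β,ν}(μ) ≤ Ψ(μ)/(β−ν) + ν, for any shift-symmetric distribution μ over
assignments of an affine unique games instance and any approximate indicator p with
0 ≤ p ≤ 1 and p(x) ≤ x/(β−ν) + ν on [0,1]. -/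
theorem stmt19
    {V : Type*} [Fintype V] [Nonempty V] [DecidableEq V]
    {Γ : Type*} [Fintype Γ] [AddCommGroup Γ] [DecidableEq Γ]
    (w : V → V → ℝ) (hsymm : ∀ u v, w u v = w v u) (hnn : ∀ u v, 0 ≤ w u v)
    (deg : V → ℝ) (hdeg : ∀ v, deg v = ∑ u, w v u) (hdegpos : ∀ v, 0 < deg v)
    (pi : V → ℝ) (hpi : ∀ v, pi v = deg v / ∑ u, deg u)
    (a : V → V → Γ) (ha : ∀ u v, a v u = - a u v)
    (β ν : ℝ) (hν0 : 0 < ν) (hνβ : ν < β) (hβ1 : β < 1)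
    (p : ℝ → ℝ)
    (hp01 : ∀ x : ℝ, 0 ≤ x → x ≤ 1 → 0 ≤ p x ∧ p x ≤ 1)
    (hpub : ∀ x : ℝ, 0 ≤ x → x ≤ 1 → p x ≤ x / (β - ν) + ν)
    (μ : (V → Γ) → ℝ) (hμnn : ∀ X, 0 ≤ μ X) (hμ1 : ∑ X : V → Γ, μ X = 1)
    (hshift : ∀ (s : Γ) (X : V → Γ), μ (fun v => X v + s) = μ X)
    (valv : V → (V → Γ) → ℝ)
    (hvalv : ∀ v X, valv v X
      = (∑ u, w v u * (if X v - X u = a v u then (1 : ℝ) else 0)) / deg v)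
    (Pr : V → V → Γ → ℝ)
    (hPr : ∀ v u s, Pr v u s = ∑ X : V → Γ, μ X * (if X v - X u = s then (1 : ℝ) else 0))
    (condval : V → V → Γ → ℝ)
    (hcond : ∀ v u s, condval v u s =
      if Pr v u s = 0 then 0
      else (∑ X : V → Γ, μ X * (if X v - X u = s then (1 : ℝ) else 0) * valv v X)
            / Pr v u s)
    (Ψ : ℝ)
    (hΨ : Ψ = ∑ u, ∑ v, pi u * pi v * ∑ s : Γ, (Pr v u s) ^ 2 * condval v u s)
    (Φ : ℝ)
    (hΦ : Φ = ∑ X : V → Γ, ∑ X' : V → Γ, μ X * μ X' *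
      ∑ s : Γ,
        (∑ u, pi u * ((if X u - X' u = s then (1 : ℝ) else 0) * p (valv u X))) ^ 2) :
    Φ ≤ Ψ / (β - ν) + ν := by
  have hpi_mem : pi ∈ stdSimplex ℝ V := funext hpi ▸
    div_sum_mem_stdSimplex (fun v => (hdegpos v).le)
      (sum_pos (fun v _ => hdegpos v) univ_nonempty).ne'
  have hval_mem (v : V) (X : V → Γ) : valv v X ∈ Set.Icc 0 1 := by
    rw [hvalv, hdeg]
    exact sum_mul_div_sum_mem_Icc (hnn v) fun u => by split_ifs <;> simp
  obtain rfl : Pr = shiftProb μ := by ext; exact hPr _ _ _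
  obtain rfl : condval = condShiftMean μ valv := by ext; exact hcond _ _ _
  rw [hΦ, hΨ, div_eq_inv_mul]
  exact stmt19_general hpi_mem ⟨hμnn, hμ1⟩ (fun v X => hp01 _ (hval_mem v X).1 (hval_mem v X).2)
    hν0.le fun v X => div_eq_inv_mul (valv v X) _ ▸ hpub _ (hval_mem v X).1 (hval_mem v X).2
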